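/- (Theorem 3, consistency of the RBRIDGE estimator.) Let β̂_k : Ω → ℝᵖ be a sequence of random vectors converging in probability to the constant vector β, and let (S_k) be a sequence of real symmetric positive definite p×p matrices converging entrywise to a symmetric positive definite matrix C. Let R be a real m×p matrix of rank m and suppose Rβ = r. Then the sequence of restricted estimators β̂ᴿ_k := β̂_k − S_k⁻¹Rᵀ(R S_k⁻¹ Rᵀ)⁻¹(R β̂_k − r) converges in probability to β. -/

import Mathlib

open Matrix Filter Topology MeasureTheory

/-!
As `R β = r`, the error of the restricted estimator is a linear image of the error of `β̂ₖ`,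
`β̂ᴿₖ - β = (1 - Gₖ R) (β̂ₖ - β)` with `Gₖ = Sₖ⁻¹Rᵀ(R Sₖ⁻¹ Rᵀ)⁻¹`. The matrices `1 - Gₖ R` converge,
because inversion is continuous at the invertible matrices `C` and `R C⁻¹ Rᵀ`; hence their operator
norms are eventually bounded by some `K`, and `‖β̂ᴿₖ - β‖ ≤ K ‖β̂ₖ - β‖` transfers convergence in
probability.
-/

section ConvergenceInMeasure

variable {ι Ω E F : Type*} [MeasurableSpace Ω] {μ : Measure Ω} {l : Filter ι}

theorem tendstoInMeasure_iff_norm_lt [SeminormedAddCommGroup E] {f : ι → Ω → E} {g : Ω → E} :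
    TendstoInMeasure μ f l g ↔
      ∀ δ > (0 : ℝ), Tendsto (fun k => μ {ω | δ < ‖f k ω - g ω‖}) l (𝓝 0) := by
  rw [tendstoInMeasure_iff_norm]
  constructor <;> intro h δ hδ
  · exact tendsto_of_tendsto_of_tendsto_of_le_of_le tendsto_const_nhds (h δ hδ)
      (fun _ => zero_le) fun _ => measure_mono fun _ (hω : δ < _) => hω.le
  · exact tendsto_of_tendsto_of_tendsto_of_le_of_le tendsto_const_nhds (h (δ / 2) (half_pos hδ))
      (fun _ => zero_le) fun _ => measure_mono fun _ => (half_lt_self hδ).trans_le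

theorem tendstoInMeasure_toLp_iff {n : Type*} [Fintype n] {f : ι → Ω → n → ℝ} {g : Ω → n → ℝ} :
    TendstoInMeasure μ (fun k ω => WithLp.toLp 2 (f k ω)) l (fun ω => WithLp.toLp 2 (g ω)) ↔
      ∀ δ > (0 : ℝ), Tendsto (fun k => μ {ω | δ < √(∑ i, (f k ω i - g ω i) ^ 2)}) l (𝓝 0) := by
  simp only [tendstoInMeasure_iff_norm_lt, ← WithLp.toLp_sub, EuclideanSpace.norm_eq, Pi.sub_apply,
    Real.norm_eq_abs, sq_abs]

theorem tendstoInMeasure_of_norm_sub_le_mul [SeminormedAddCommGroup E] [SeminormedAddCommGroup F]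
    {f : ι → Ω → E} {g : Ω → E} {f' : ι → Ω → F} {g' : Ω → F} (hf : TendstoInMeasure μ f l g)
    (K : ℝ) (hle : ∀ᶠ k in l, ∀ᵐ ω ∂μ, ‖f' k ω - g' ω‖ ≤ K * ‖f k ω - g ω‖) :
    TendstoInMeasure μ f' l g' := by
  rw [tendstoInMeasure_iff_norm_lt] at hf ⊢
  intro δ hδ
  have hK : 0 < |K| + 1 := by positivity
  refine tendsto_of_tendsto_of_tendsto_of_le_of_le' tendsto_const_nhds
    (hf (δ / (|K| + 1)) (div_pos hδ hK)) (.of_forall fun _ => zero_le) ?_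
  filter_upwards [hle] with k hk
  refine measure_mono_ae ?_
  filter_upwards [hk] with ω hω (hδω : δ < ‖f' k ω - g' ω‖)
  have hKω : K * ‖f k ω - g ω‖ ≤ (|K| + 1) * ‖f k ω - g ω‖ := by
    gcongr
    exact (le_abs_self K).trans (lt_add_one _).le
  exact (div_lt_iff₀' hK).2 (hδω.trans_le (hω.trans hKω))

end ConvergenceInMeasure

section MatrixContinuity

variable {l m n X 𝕜 : Type*} [Fintype m] [TopologicalSpace X] [TopologicalSpace 𝕜]

theorem continuousAt_matrix_mul [NonUnitalNonAssocSemiring 𝕜] [ContinuousAdd 𝕜] [ContinuousMul 𝕜]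
    {A : X → Matrix l m 𝕜} {B : X → Matrix m n 𝕜} {x : X} (hA : ContinuousAt A x)
    (hB : ContinuousAt B x) : ContinuousAt (fun y => A y * B y) x :=
  (continuous_fst.matrix_mul continuous_snd).continuousAt.comp (hA.prodMk hB)

theorem continuousAt_matrix_inv_of_isUnit [DecidableEq m] [Field 𝕜] [IsTopologicalDivisionRing 𝕜]
    {A : Matrix m m 𝕜} (hA : IsUnit A) : ContinuousAt Inv.inv A := by
  refine continuousAt_matrix_inv A ?_
  rw [Ring.inverse_eq_inv']
  exact continuousAt_inv₀ ((isUnit_iff_isUnit_det A).1 hA).ne_zero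

end MatrixContinuity

section FullRowRank

variable {m n 𝕜 : Type*} [Fintype m] [Fintype n] [Field 𝕜] {R : Matrix m n 𝕜}

theorem vecMul_injective_of_rank_eq_card (hR : R.rank = Fintype.card m) :
    Function.Injective R.vecMul := by
  rw [vecMul_injective_iff, linearIndependent_iff_card_eq_finrank_span, Set.finrank,
    ← rank_eq_finrank_span_row, hR]

theorem isUnit_mul_inv_mul_transpose [DecidableEq m] [DecidableEq n] [PartialOrder 𝕜] [StarRing 𝕜]
    [TrivialStar 𝕜] {C : Matrix n n 𝕜} (hC : C.PosDef)
    (hR : R.rank = Fintype.card m) : IsUnit (R * C⁻¹ * Rᵀ) := by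
  rw [← conjTranspose_eq_transpose_of_trivial]
  exact (hC.inv.mul_mul_conjTranspose_same (vecMul_injective_of_rank_eq_card hR)).isUnit

end FullRowRank

section RestrictedEstimator

variable {m n 𝕜 : Type*} [Fintype m] [Fintype n] [DecidableEq m] [DecidableEq n]

/-- The gain matrix `S⁻¹Rᵀ(R S⁻¹ Rᵀ)⁻¹`, which turns the violation `R b - r` of the linear
restriction `R b = r` into the correction of `b` made by the restricted estimator. -/
noncomputable def restrictionGain [CommRing 𝕜] (S : Matrix n n 𝕜) (R : Matrix m n 𝕜) :
    Matrix n m 𝕜 :=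
  S⁻¹ * Rᵀ * (R * S⁻¹ * Rᵀ)⁻¹

/-- The restricted estimator `b - S⁻¹Rᵀ(R S⁻¹ Rᵀ)⁻¹(R b - r)` obtained from the unrestricted
estimate `b`, the weight matrix `S` and the linear restriction `R b = r`. -/
noncomputable def restrictedEstimator [CommRing 𝕜] (S : Matrix n n 𝕜) (R : Matrix m n 𝕜)
    (r : m → 𝕜) (b : n → 𝕜) : n → 𝕜 :=
  b - restrictionGain S R *ᵥ (R *ᵥ b - r)

theorem restrictedEstimator_sub [CommRing 𝕜] (S : Matrix n n 𝕜) {R : Matrix m n 𝕜} {r : m → 𝕜}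
    (b : n → 𝕜) {β : n → 𝕜} (hβ : R *ᵥ β = r) :
    restrictedEstimator S R r b - β = (1 - restrictionGain S R * R) *ᵥ (b - β) := by
  rw [restrictedEstimator, ← hβ, ← mulVec_sub, mulVec_mulVec, sub_mulVec, one_mulVec]
  abel

theorem continuousAt_restrictionGain [Field 𝕜] [TopologicalSpace 𝕜] [IsTopologicalDivisionRing 𝕜]
    {C : Matrix n n 𝕜} {R : Matrix m n 𝕜} (hC : IsUnit C) (hRC : IsUnit (R * C⁻¹ * Rᵀ)) :
    ContinuousAt (restrictionGain · R) C := by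
  have hinv : ContinuousAt Inv.inv C := continuousAt_matrix_inv_of_isUnit hC
  have hgram : ContinuousAt (fun S => R * S⁻¹ * Rᵀ) C :=
    continuousAt_matrix_mul (continuousAt_matrix_mul continuousAt_const hinv) continuousAt_const
  exact continuousAt_matrix_mul (continuousAt_matrix_mul hinv continuousAt_const)
    (ContinuousAt.comp (continuousAt_matrix_inv_of_isUnit hRC) hgram)

-- The topology of this norm is definitionally the entrywise one.
open scoped Matrix.Norms.L2Operator

theorem norm_toLp_restrictedEstimator_sub_le [RCLike 𝕜] (S : Matrix n n 𝕜) {R : Matrix m n 𝕜}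
    {r : m → 𝕜} (b : n → 𝕜) {β : n → 𝕜} (hβ : R *ᵥ β = r) :
    ‖WithLp.toLp 2 (restrictedEstimator S R r b) - WithLp.toLp 2 β‖ ≤
      ‖1 - restrictionGain S R * R‖ * ‖WithLp.toLp 2 b - WithLp.toLp 2 β‖ := by
  rw [← WithLp.toLp_sub, restrictedEstimator_sub S b hβ, ← WithLp.toLp_sub]
  exact l2_opNorm_mulVec _ _

theorem isBoundedUnder_norm_one_sub_restrictionGain_mul [RCLike 𝕜] {ι : Type*} {l : Filter ι}
    {S : ι → Matrix n n 𝕜} {C : Matrix n n 𝕜} {R : Matrix m n 𝕜} (hS : Tendsto S l (𝓝 C))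
    (hC : IsUnit C) (hRC : IsUnit (R * C⁻¹ * Rᵀ)) :
    l.IsBoundedUnder (· ≤ ·) fun k => ‖1 - restrictionGain (S k) R * R‖ := by
  have hcont : ContinuousAt (fun T => 1 - restrictionGain T R * R) C :=
    continuousAt_const.sub
      (continuousAt_matrix_mul (continuousAt_restrictionGain hC hRC) continuousAt_const)
  exact (hcont.tendsto.comp hS).norm.isBoundedUnder_le

theorem rbridge_consistency_general [RCLike 𝕜] {ι Ω : Type*} [MeasurableSpace Ω] {μ : Measure Ω}
    {l : Filter ι} {b : ι → Ω → n → 𝕜} {β : Ω → n → 𝕜}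
    (hb : TendstoInMeasure μ (fun k ω => WithLp.toLp 2 (b k ω)) l fun ω => WithLp.toLp 2 (β ω))
    {S : ι → Matrix n n 𝕜} {C : Matrix n n 𝕜} (hS : Tendsto S l (𝓝 C)) (hC : IsUnit C)
    {R : Matrix m n 𝕜} (hRC : IsUnit (R * C⁻¹ * Rᵀ)) {r : m → 𝕜} (hβ : ∀ᵐ ω ∂μ, R *ᵥ β ω = r) :
    TendstoInMeasure μ (fun k ω => WithLp.toLp 2 (restrictedEstimator (S k) R r (b k ω))) l
      fun ω => WithLp.toLp 2 (β ω) := by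
  obtain ⟨K, hK⟩ := isBoundedUnder_norm_one_sub_restrictionGain_mul hS hC hRC
  refine tendstoInMeasure_of_norm_sub_le_mul hb K ?_
  filter_upwards [eventually_map.1 hK] with k hk
  filter_upwards [hβ] with ω hω
  exact (norm_toLp_restrictedEstimator_sub_le (S k) (b k ω) hω).trans (by gcongr)

end RestrictedEstimator

/-- Theorem 3 (consistency of the RBRIDGE estimator): if the random vectors `β̂ₖ`
converge in probability to the constant vector `β` (convergence in probability of
`Zₖ` to `z` means `P(‖Zₖ − z‖ > δ) → 0` for every `δ > 0`, with the Euclidean norm),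
the symmetric positive definite matrices `Sₖ` converge entrywise to a symmetric
positive definite matrix `C`, `R` has rank `m`, and `Rβ = r`, then the restricted
estimators `β̂ᴿₖ := β̂ₖ − Sₖ⁻¹Rᵀ(R Sₖ⁻¹ Rᵀ)⁻¹(R β̂ₖ − r)` converge in probability
to `β`. -/
theorem rbridge_consistency {p m : ℕ} (hp : 0 < p) (hm : 0 < m) (hmp : m ≤ p)
    {Ω : Type*} [MeasurableSpace Ω] (μ : Measure Ω) [IsProbabilityMeasure μ]
    (βk : ℕ → Ω → Fin p → ℝ) (hβkmeas : ∀ k i, Measurable fun ω => βk k ω i)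
    (β : Fin p → ℝ)
    (hβconv : ∀ δ > (0 : ℝ),
      Tendsto (fun k => μ {ω | δ < Real.sqrt (∑ i, (βk k ω i - β i) ^ 2)}) atTop (𝓝 0))
    (S : ℕ → Matrix (Fin p) (Fin p) ℝ) (hSk : ∀ k, (S k).PosDef)
    (C : Matrix (Fin p) (Fin p) ℝ) (hC : C.PosDef)
    (hSconv : ∀ i j, Tendsto (fun k => S k i j) atTop (𝓝 (C i j)))
    (R : Matrix (Fin m) (Fin p) ℝ) (hR : R.rank = m)
    (r : Fin m → ℝ) (hβr : R.mulVec β = r) :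
    let βkR : ℕ → Ω → Fin p → ℝ := fun k ω =>
      βk k ω - ((S k)⁻¹ * Rᵀ * (R * (S k)⁻¹ * Rᵀ)⁻¹).mulVec (R.mulVec (βk k ω) - r)
    ∀ δ > (0 : ℝ),
      Tendsto (fun k => μ {ω | δ < Real.sqrt (∑ i, (βkR k ω i - β i) ^ 2)}) atTop (𝓝 0) := by
  exact tendstoInMeasure_toLp_iff.1 <| rbridge_consistency_general
    (tendstoInMeasure_toLp_iff.2 hβconv) (tendsto_pi_nhds.2 fun i => tendsto_pi_nhds.2 (hSconv i))
    hC.isUnit (isUnit_mul_inv_mul_transpose hC (by rwa [Fintype.card_fin]))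
    (.of_forall fun _ => hβr)
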